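/- Let V be a finite-dimensional complex vector space of dimension r and let f : V → V be a linear endomorphism whose minimal polynomial has degree r. Then for an endomorphism u of V, there exists g ∈ End(V) with u = f∘g − g∘f if and only if Tr(fⁱ ∘ u) = 0 for every natural number i; that is, the image of the adjoint map ad(f) : g ↦ f∘g − g∘f equals the trace-orthogonal complement of the polynomials in f. -/

import Mathlib

open Polynomial Module in
theorem aux_cyclic
    (V : Type*) [AddCommGroup V] [Module ℂ V] [FiniteDimensional ℂ V]
    (f : Module.End ℂ V) : ∃ x : V, ∀ p : ℂ[X], aeval f p x = 0 → minpoly ℂ f ∣ p := by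
  obtain ⟨x, hx⟩ := Module.exists_ker_toSpanSingleton_eq_annihilator ℂ[X] (Module.AEval' f)
  obtain ⟨x, rfl⟩ := (Module.AEval'.of f).surjective x
  refine ⟨x, fun p hp => ?_⟩
  rw [← Ideal.mem_span_singleton, span_minpoly_eq_annihilator, ← hx,
    LinearMap.mem_ker, LinearMap.toSpanSingleton_apply]
  have := Module.AEval.of_aeval_smul (R := ℂ) (a := f) p x
  rw [← this]
  simp [hp]

open Polynomial Module in
theorem aux_commute
    (V : Type*) [AddCommGroup V] [Module ℂ V] [FiniteDimensional ℂ V]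
    (f : Module.End ℂ V)
    (hf : (minpoly ℂ f).natDegree = Module.finrank ℂ V)
    (c : Module.End ℂ V) (hc : Commute c f) : ∃ p : ℂ[X], c = aeval f p := by
  obtain ⟨x, hx⟩ := aux_cyclic V f
  let T : degreeLT ℂ (Module.finrank ℂ V) →ₗ[ℂ] V :=
    (LinearMap.applyₗ x ∘ₗ (aeval f).toLinearMap) ∘ₗ (degreeLT ℂ (Module.finrank ℂ V)).subtype
  have hT : ∀ p, T p = aeval f p.1 x := fun p => rfl
  have hinj : Function.Injective T := by
    rw [← LinearMap.ker_eq_bot, LinearMap.ker_eq_bot']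
    rintro ⟨p, hp⟩ h
    have h1 := hx p h
    rw [mem_degreeLT, ← hf] at hp
    have hm : minpoly ℂ f ≠ 0 := minpoly.ne_zero (Algebra.IsIntegral.isIntegral f)
    rw [← degree_eq_natDegree hm] at hp
    exact Subtype.ext (eq_zero_of_dvd_of_degree_lt h1 hp)
  have hfr : Module.finrank ℂ (degreeLT ℂ (Module.finrank ℂ V)) = Module.finrank ℂ V := by
    rw [(degreeLTEquiv ℂ _).finrank_eq]; simp
  have : FiniteDimensional ℂ (degreeLT ℂ (Module.finrank ℂ V)) :=
    (degreeLTEquiv ℂ _).symm.finiteDimensional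
  have hsurj : Function.Surjective T :=
    (LinearMap.injective_iff_surjective_of_finrank_eq_finrank hfr).1 hinj
  obtain ⟨p, hp⟩ := hsurj (c x)
  rw [hT] at hp
  refine ⟨p.1, LinearMap.ext fun v => ?_⟩
  obtain ⟨q, rfl⟩ := hsurj v
  rw [hT]
  have h1 : c * aeval f q.1 = aeval f q.1 * c := by
    induction q.1 using Polynomial.induction_on' with
    | add a b ha hb => simp [mul_add, add_mul, ha, hb]
    | monomial n a =>
      rw [aeval_monomial]
      exact ((Algebra.commute_algebraMap_right a c).mul_right (hc.pow_right n)).eq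
  have h2 : aeval f q.1 * aeval f p.1 = aeval f p.1 * aeval f q.1 := by
    rw [← map_mul, ← map_mul, mul_comm]
  have e1 := LinearMap.congr_fun h1 x
  have e2 := LinearMap.congr_fun h2 x
  simp only [Module.End.mul_apply] at e1 e2
  rw [e1, ← hp, e2]

theorem aux_nondeg
    (V : Type*) [AddCommGroup V] [Module ℂ V] [FiniteDimensional ℂ V]
    (a : Module.End ℂ V) (h : ∀ g, LinearMap.trace ℂ V (a * g) = 0) : a = 0 := by
  let b := Module.finBasis ℂ V
  apply (LinearMap.toMatrixAlgEquiv b).injective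
  rw [map_zero, Matrix.ext_iff_trace_mul_right]
  intro M
  obtain ⟨g, rfl⟩ := (LinearMap.toMatrixAlgEquiv b).surjective M
  rw [← map_mul]
  have := h g
  rw [LinearMap.trace_eq_matrix_trace ℂ b] at this
  rw [zero_mul, Matrix.trace_zero]
  exact this

/-- Let `V` be a finite-dimensional complex vector space of dimension `r`
and `f : V → V` a linear endomorphism whose minimal polynomial has degree `r`.
Then an endomorphism `u` of `V` is of the form `u = f∘g − g∘f` for some `g` if and only if
`Tr(fⁱ ∘ u) = 0` for every natural number `i`; i.e. `im (ad f)` equals the trace-orthogonal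
complement of the polynomials in `f`. -/
theorem image_adjoint_eq_trace_orthogonal
    (V : Type*) [AddCommGroup V] [Module ℂ V] [FiniteDimensional ℂ V]
    (f : Module.End ℂ V)
    (hf : (minpoly ℂ f).natDegree = Module.finrank ℂ V)
    (u : Module.End ℂ V) :
    (∃ g : Module.End ℂ V, u = f * g - g * f) ↔
      ∀ i : ℕ, LinearMap.trace ℂ V (f ^ i * u) = 0 := by
  constructor
  · rintro ⟨g, rfl⟩ i
    rw [mul_sub, map_sub, ← mul_assoc, ← mul_assoc, LinearMap.trace_mul_comm ℂ (f ^ i * g) f,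
      ← mul_assoc, ← pow_succ, ← pow_succ', sub_self]
  · intro h
    let ad : Module.End ℂ V →ₗ[ℂ] Module.End ℂ V :=
      LinearMap.mulLeft ℂ f - LinearMap.mulRight ℂ f
    have had : ∀ g, ad g = f * g - g * f := fun g => rfl
    suffices hu : u ∈ LinearMap.range ad by
      obtain ⟨g, hg⟩ := hu
      exact ⟨g, by rw [← hg, had]⟩
    rw [← Subspace.forall_mem_dualAnnihilator_apply_eq_zero_iff]
    intro φ hφ
    let B : Module.End ℂ V →ₗ[ℂ] Module.Dual ℂ (Module.End ℂ V) :=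
      (LinearMap.mul ℂ (Module.End ℂ V)).compr₂ (LinearMap.trace ℂ V)
    have hB : ∀ a g, B a g = LinearMap.trace ℂ V (a * g) := fun a g => rfl
    have hinj : Function.Injective B := by
      rw [← LinearMap.ker_eq_bot, LinearMap.ker_eq_bot']
      intro a ha
      exact aux_nondeg V a fun g => by rw [← hB, ha]; rfl
    obtain ⟨c, rfl⟩ := (LinearMap.injective_iff_surjective_of_finrank_eq_finrank
      Subspace.dual_finrank_eq.symm).1 hinj φ
    have hc : Commute c f := by
      refine sub_eq_zero.1 (aux_nondeg V _ fun g => ?_)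
      have := (Submodule.mem_dualAnnihilator _).1 hφ (ad g) ⟨g, rfl⟩
      rw [hB, had, mul_sub, map_sub, ← mul_assoc, ← mul_assoc,
        LinearMap.trace_mul_comm ℂ (c * g) f, ← mul_assoc] at this
      rw [sub_mul, map_sub, this]
    obtain ⟨p, rfl⟩ := aux_commute V f hf c hc
    rw [hB, Polynomial.aeval_eq_sum_range, Finset.sum_mul, map_sum]
    exact Finset.sum_eq_zero fun i _ => by rw [smul_mul_assoc, map_smul, h, smul_zero]
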